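/- (Chain-structured systems admit k-step linear prediction.) The chain-structured system with nonlinearity concentrated in x_k (as defined in the context) admits an N-step linear predictor for every N ∈ {1, …, k}. -/

import Mathlib

open Matrix

noncomputable section

/-- Index type for a block-partitioned state `x = col(x₁, …, x_K)` with
`x_i ∈ ℝ^{dims i}`. -/
abbrev Blk {K : ℕ} (dims : Fin K → ℕ) : Type := (i : Fin K) × Fin (dims i)

/-- The `i`-th block of a block-partitioned state. -/
def blk {K : ℕ} {dims : Fin K → ℕ} (x : Blk dims → ℝ) (i : Fin K) : Fin (dims i) → ℝ :=
  fun j => x ⟨i, j⟩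

/-- The `N`-step iterated dynamics `f_N`. -/
def iterDyn {ι : Type} {m : ℕ} (f : (ι → ℝ) → (Fin m → ℝ) → (ι → ℝ)) :
    (N : ℕ) → (ι → ℝ) → (Fin N → (Fin m → ℝ)) → (ι → ℝ)
  | 0, x, _ => x
  | N + 1, x, u => f (iterDyn f N x (fun i => u i.castSucc)) (u (Fin.last N))

/-- The system `x⁺ = f(x,u)` admits an `N`-step linear predictor on `X`, `U`. -/
def HasNStepLinearPredictor {ι : Type} [Fintype ι] {m : ℕ}
    (f : (ι → ℝ) → (Fin m → ℝ) → (ι → ℝ))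
    (X : Set (ι → ℝ)) (U : Set (Fin m → ℝ)) (N : ℕ) : Prop :=
  ∃ (Φ : (ι → ℝ) → (ι → ℝ)) (B : Matrix ι (Fin N × Fin m) ℝ),
    ∀ x ∈ X, ∀ u : Fin N → (Fin m → ℝ), (∀ i, u i ∈ U) →
      iterDyn f N x u = Φ x + B.mulVec (fun p => u p.1 p.2)

/-- The chain-structured system with nonlinearity concentrated in the last block
(`k+1` blocks, indexed `0, …, k`, corresponding to the paper's `x₁, …, x_k`):
`x₁⁺ = M₁u + C₁x_{1:k−1} + g₁(x_k)`, `x_i⁺ = M_i x_{i−1} + C_i x_{i:k−1} + g_i(x_k)`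
for `i = 2, …, k−1`, and `x_k⁺ = M_k x_{k−1} + g_k(x_k)`, where each `C_i` only acts on the
blocks `x_{i:k−1}` (encoded by a column-support condition), and `M_i` has full row rank for
`i = 1, …, k−1` (all `M`'s except the last one). -/
def IsChainSystem {k m : ℕ} (dims : Fin (k + 1) → ℕ)
    (f : (Blk dims → ℝ) → (Fin m → ℝ) → (Blk dims → ℝ))
    (X : Set (Blk dims → ℝ)) (U : Set (Fin m → ℝ))
    (M₀ : Matrix (Fin (dims 0)) (Fin m) ℝ)
    (M : (i : Fin k) → Matrix (Fin (dims i.succ)) (Fin (dims i.castSucc)) ℝ)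
    (C : (i : Fin (k + 1)) → Matrix (Fin (dims i)) (Blk dims) ℝ)
    (g : (i : Fin (k + 1)) → (Fin (dims (Fin.last k)) → ℝ) → Fin (dims i) → ℝ) : Prop :=
  (∀ i : Fin (k + 1), ∀ q : Blk dims,
      ¬((i : ℕ) ≤ (q.1 : ℕ) ∧ (q.1 : ℕ) < k) → ∀ j, C i j q = 0) ∧
  M₀.rank = dims 0 ∧
  (∀ i : Fin k, (i : ℕ) < k - 1 → (M i).rank = dims i.succ) ∧
  (∀ x ∈ X, ∀ u ∈ U,
    blk (f x u) 0 = M₀.mulVec u + (C 0).mulVec x + g 0 (blk x (Fin.last k)) ∧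
    ∀ i : Fin k,
      blk (f x u) i.succ =
        (M i).mulVec (blk x i.castSucc) + (C i.succ).mulVec x +
          g i.succ (blk x (Fin.last k)))

/-- The linear part of the chain dynamics in the state. -/
def chainStateMap {k : ℕ} {dims : Fin (k + 1) → ℕ}
    (M : (i : Fin k) → Matrix (Fin (dims i.succ)) (Fin (dims i.castSucc)) ℝ)
    (C : (i : Fin (k + 1)) → Matrix (Fin (dims i)) (Blk dims) ℝ) :
    (Blk dims → ℝ) →ₗ[ℝ] (Blk dims → ℝ) where
  toFun x p := (C p.1).mulVec x p.2 +
    Fin.cases (motive := fun i => Fin (dims i) → ℝ) 0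
      (fun i => (M i).mulVec (blk x i.castSucc)) p.1 p.2
  map_add' x y := by
    have hblk (i : Fin (k + 1)) : blk (x + y) i = blk x i + blk y i := rfl
    ext ⟨i, j⟩
    cases i using Fin.cases <;> simp [mulVec_add, hblk]
    ring
  map_smul' c x := by
    have hblk (i : Fin (k + 1)) : blk (c • x) i = c • blk x i := rfl
    ext ⟨i, j⟩
    cases i using Fin.cases <;> simp [mulVec_smul, hblk]
    ring

/-- The linear part of the chain dynamics in the input, which only enters the first block. -/
def chainInputMap {k m : ℕ} {dims : Fin (k + 1) → ℕ} (M₀ : Matrix (Fin (dims 0)) (Fin m) ℝ) :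
    (Fin m → ℝ) →ₗ[ℝ] (Blk dims → ℝ) where
  toFun u p := Fin.cases (motive := fun i => Fin (dims i) → ℝ) (M₀.mulVec u) (fun _ => 0) p.1 p.2
  map_add' u v := by
    ext ⟨i, j⟩
    cases i using Fin.cases <;> simp [mulVec_add]
  map_smul' c u := by
    ext ⟨i, j⟩
    cases i using Fin.cases <;> simp [mulVec_smul]

/-- A chain system is linear up to a function of the last block. -/
theorem IsChainSystem.apply_eq {k m : ℕ} {dims : Fin (k + 1) → ℕ}
    {f : (Blk dims → ℝ) → (Fin m → ℝ) → (Blk dims → ℝ)}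
    {X : Set (Blk dims → ℝ)} {U : Set (Fin m → ℝ)}
    {M₀ : Matrix (Fin (dims 0)) (Fin m) ℝ}
    {M : (i : Fin k) → Matrix (Fin (dims i.succ)) (Fin (dims i.castSucc)) ℝ}
    {C : (i : Fin (k + 1)) → Matrix (Fin (dims i)) (Blk dims) ℝ}
    {g : (i : Fin (k + 1)) → (Fin (dims (Fin.last k)) → ℝ) → Fin (dims i) → ℝ}
    (h : IsChainSystem dims f X U M₀ M C g) {x : Blk dims → ℝ} (hx : x ∈ X)
    {u : Fin m → ℝ} (hu : u ∈ U) :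
    f x u = chainStateMap M C x + chainInputMap M₀ u +
      fun p => g p.1 (blk x (Fin.last k)) p.2 := by
  obtain ⟨h0, hs⟩ := h.2.2.2 x hx u hu
  ext ⟨i, j⟩
  cases i using Fin.cases with
  | zero =>
    have := congrFun h0 j
    simp only [blk, Pi.add_apply] at this
    simp [chainStateMap, chainInputMap, this, add_comm]
  | succ i =>
    have := congrFun (hs i) j
    simp only [blk, Pi.add_apply] at this
    simp [chainStateMap, chainInputMap, this, add_comm]

/-- The state map moves the support of a state by at most one block. -/
theorem IsChainSystem.chainStateMap_apply_eq_zero {k m : ℕ} {dims : Fin (k + 1) → ℕ}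
    {f : (Blk dims → ℝ) → (Fin m → ℝ) → (Blk dims → ℝ)}
    {X : Set (Blk dims → ℝ)} {U : Set (Fin m → ℝ)}
    {M₀ : Matrix (Fin (dims 0)) (Fin m) ℝ}
    {M : (i : Fin k) → Matrix (Fin (dims i.succ)) (Fin (dims i.castSucc)) ℝ}
    {C : (i : Fin (k + 1)) → Matrix (Fin (dims i)) (Blk dims) ℝ}
    {g : (i : Fin (k + 1)) → (Fin (dims (Fin.last k)) → ℝ) → Fin (dims i) → ℝ}
    (h : IsChainSystem dims f X U M₀ M C g) {n : ℕ} {x : Blk dims → ℝ}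
    (hx : ∀ q : Blk dims, n ≤ (q.1 : ℕ) → x q = 0) (p : Blk dims) (hp : n + 1 ≤ (p.1 : ℕ)) :
    chainStateMap M C x p = 0 := by
  obtain ⟨i, j⟩ := p
  have hC : (C i).mulVec x j = 0 := by
    refine Finset.sum_eq_zero fun q _ => ?_
    by_cases hq : n ≤ (q.1 : ℕ)
    · rw [hx q hq, mul_zero]
    · exact mul_eq_zero_of_left (h.1 i q (by dsimp only at hp; omega) j) _
  cases i using Fin.cases with
  | zero => simp at hp
  | succ i =>
    have hi : blk x i.castSucc = 0 := by
      ext l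
      exact hx ⟨i.castSucc, l⟩ (by simpa using hp)
    simp [chainStateMap, hC, hi]

/-- Iterates of a map leaving `X` invariant stay in `X`. -/
theorem iterDyn_mem {ι : Type} {m : ℕ} {f : (ι → ℝ) → (Fin m → ℝ) → (ι → ℝ)}
    {X : Set (ι → ℝ)} {U : Set (Fin m → ℝ)} (hf : ∀ x ∈ X, ∀ u ∈ U, f x u ∈ X)
    {x : ι → ℝ} (hx : x ∈ X) :
    ∀ (N : ℕ) (u : Fin N → Fin m → ℝ), (∀ i, u i ∈ U) → iterDyn f N x u ∈ X
  | 0, _, _ => hx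
  | N + 1, _, hu => hf _ (iterDyn_mem hf hx N _ fun _ => hu _) _ (hu _)

/-- After `N ≤ k + 1` steps the state is affine in the inputs, which have reached only the first
`N` blocks. -/
theorem IsChainSystem.exists_iterDyn_eq {k m : ℕ} {dims : Fin (k + 1) → ℕ}
    {f : (Blk dims → ℝ) → (Fin m → ℝ) → (Blk dims → ℝ)}
    {X : Set (Blk dims → ℝ)} {U : Set (Fin m → ℝ)}
    (hf : ∀ x ∈ X, ∀ u ∈ U, f x u ∈ X)
    {M₀ : Matrix (Fin (dims 0)) (Fin m) ℝ}
    {M : (i : Fin k) → Matrix (Fin (dims i.succ)) (Fin (dims i.castSucc)) ℝ}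
    {C : (i : Fin (k + 1)) → Matrix (Fin (dims i)) (Blk dims) ℝ}
    {g : (i : Fin (k + 1)) → (Fin (dims (Fin.last k)) → ℝ) → Fin (dims i) → ℝ}
    (h : IsChainSystem dims f X U M₀ M C g) (N : ℕ) (hN : N ≤ k + 1) :
    ∃ (Φ : (Blk dims → ℝ) → (Blk dims → ℝ))
      (L : (Fin N → Fin m → ℝ) →ₗ[ℝ] (Blk dims → ℝ)),
      (∀ u (p : Blk dims), N ≤ (p.1 : ℕ) → L u p = 0) ∧
      ∀ x ∈ X, ∀ u, (∀ i, u i ∈ U) → iterDyn f N x u = Φ x + L u := by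
  induction N with
  | zero => exact ⟨id, 0, by simp, by simp [iterDyn]⟩
  | succ N ih =>
    obtain ⟨Φ, L, hL, hΦ⟩ := ih (by omega)
    refine ⟨fun x => chainStateMap M C (Φ x) + fun p => g p.1 (blk (Φ x) (Fin.last k)) p.2,
      chainStateMap M C ∘ₗ L ∘ₗ LinearMap.funLeft ℝ _ Fin.castSucc +
        chainInputMap M₀ ∘ₗ LinearMap.proj (Fin.last N), ?_, ?_⟩
    · rintro u ⟨i, j⟩ hp
      have hA := h.chainStateMap_apply_eq_zero (hL (LinearMap.funLeft ℝ _ Fin.castSucc u)) ⟨i, j⟩ hp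
      cases i using Fin.cases with
      | zero => simp at hp
      | succ i => simp [hA, chainInputMap]
    · intro x hx u hu
      have hmem := iterDyn_mem hf hx N (fun i => u i.castSucc) fun i => hu _
      have hlast : blk (Φ x + L fun i => u i.castSucc) (Fin.last k) = blk (Φ x) (Fin.last k) := by
        ext j
        simp [blk, hL _ (⟨Fin.last k, j⟩ : Blk dims) (by simp; omega)]
      have hu' : LinearMap.funLeft ℝ (Fin m → ℝ) Fin.castSucc u = fun i => u i.castSucc := rfl
      rw [iterDyn, h.apply_eq hmem (hu _), hΦ x hx _ fun i => hu _, hlast, map_add]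
      simp only [LinearMap.add_apply, LinearMap.comp_apply, LinearMap.proj_apply, hu']
      abel

/-- **Chain-structured systems admit `k`-step linear prediction.**  A chain-structured
system with `k` blocks (here: `k+1` Lean-blocks, the paper's `k` equals `k+1`) admits an
`N`-step linear predictor for every `N ∈ {1, …, k}`. -/
theorem chain_system_admits_k_step_prediction
    {k m : ℕ} (dims : Fin (k + 1) → ℕ)
    (f : (Blk dims → ℝ) → (Fin m → ℝ) → (Blk dims → ℝ))
    (X : Set (Blk dims → ℝ)) (U : Set (Fin m → ℝ))
    (hf : ∀ x ∈ X, ∀ u ∈ U, f x u ∈ X)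
    (M₀ : Matrix (Fin (dims 0)) (Fin m) ℝ)
    (M : (i : Fin k) → Matrix (Fin (dims i.succ)) (Fin (dims i.castSucc)) ℝ)
    (C : (i : Fin (k + 1)) → Matrix (Fin (dims i)) (Blk dims) ℝ)
    (g : (i : Fin (k + 1)) → (Fin (dims (Fin.last k)) → ℝ) → Fin (dims i) → ℝ)
    (hchain : IsChainSystem dims f X U M₀ M C g) :
    ∀ N : ℕ, 1 ≤ N → N ≤ k + 1 → HasNStepLinearPredictor f X U N := by
  intro N _ hN
  obtain ⟨Φ, L, -, hΦ⟩ := hchain.exists_iterDyn_eq hf N hN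
  refine ⟨Φ, LinearMap.toMatrix' (L ∘ₗ (LinearEquiv.curry ℝ ℝ (Fin N) (Fin m)).toLinearMap), ?_⟩
  intro x hx u hu
  rw [hΦ x hx u hu, LinearMap.toMatrix'_mulVec]
  rfl
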